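/- Let s ≥ 8 and set A(y) = (7/10)·Q·y. Then: (a) the function y ↦ OPT(1, A(y), A(y), 1, y, y, s) is strictly decreasing on 0 ≤ y ≤ 1/(2Q), and its value at y = 0 is 3; (b) for every fixed y with 0 ≤ y ≤ 1/(2Q), the function z ↦ OPT(1, A(y+z), A(y−z), 1, y+z, y−z, s) is decreasing on 0 ≤ z ≤ y. -/

import Mathlib

/-- `q(x) = exp(x) - x - 1`. -/
noncomputable def q (x : ℝ) : ℝ := Real.exp x - x - 1

/-- `Q(x) = x·(exp(x) − 1)/(exp(x) − x − 1)`. -/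
noncomputable def Qf (x : ℝ) : ℝ := x * (Real.exp x - 1) / (Real.exp x - x - 1)

/-- `OPT(x₀,x₁,x₂,y₀,y₁,y₂,s) = OPT1 · OPT2 · OPT3` with `Q = Q(s)`. -/
noncomputable def OPT (x₀ x₁ x₂ y₀ y₁ y₂ s : ℝ) : ℝ :=
  ((q (s*x₀) + q (s*x₁) + q (s*x₂)) / q s) *
  (1 / (x₀*y₀ + x₁*y₁ + x₂*y₂)) ^ (Qf s) *
  ((y₀+y₁+y₂) ^ (Qf s) +
    2 * (y₀^2 + y₁^2 + y₂^2 - y₀*y₁ - y₀*y₂ - y₁*y₂) ^ (Qf s / 2))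

/-!
All three factors of `OPT` are positive along the two slices, so it suffices to bound their
logarithmic derivatives by multiples of `Q² x`, where `x` is the moving variable. On the diagonal
`y₁ = y₂ = y` the multiples are `1/5`, `-5/2` and `9/4`; for the splitting `y₁ = y + z`,
`y₂ = y - z` they are `3/2`, `-5/2` and `1/2`. Both sums are negative.

The delicate one is `9/4`: with `t = ((1 + 2y)/(1 - y))^(Q - 1) ≤ exp (3Qy)`, the logarithmic
derivative of the third factor is at most `2Q(t - 1)/(t + 2)`, and `(exp u - 1)/(exp u + 2)` has
slope at most `3/8` by AM-GM.
-/

section LogDeriv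

variable {f g h : ℝ → ℝ} {x : ℝ}

lemma logDeriv_le_of_hasDerivAt {f' K : ℝ} (hf : HasDerivAt f f' x) (hpos : 0 < f x)
    (hle : f' ≤ K * f x) : logDeriv f x ≤ K := by
  rwa [logDeriv_apply, hf.deriv, div_le_iff₀ hpos]

lemma logDeriv_rpow_const (p : ℝ) (hf : DifferentiableAt ℝ f x) (hpos : 0 < f x) :
    logDeriv (fun t => f t ^ p) x = p * logDeriv f x := by
  have hp : f x ^ p ≠ 0 := (Real.rpow_pos_of_pos hpos p).ne'
  rw [logDeriv_apply, logDeriv_apply, (hf.hasDerivAt.rpow_const (p := p) (.inl hpos.ne')).deriv,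
    Real.rpow_sub_one hpos.ne']
  field_simp

lemma logDeriv_const_add_le {c : ℝ} (hc : 0 ≤ c) (hpos : 0 < f x) (hf : 0 ≤ logDeriv f x) :
    logDeriv (fun t => c + f t) x ≤ logDeriv f x := by
  have hderiv : deriv f x = logDeriv f x * f x := by
    rw [logDeriv_apply, div_mul_cancel₀ _ hpos.ne']
  rw [logDeriv_apply, deriv_const_add, div_le_iff₀ (by positivity), hderiv]
  exact mul_le_mul_of_nonneg_left (le_add_of_nonneg_left hc) hf

lemma strictAntiOn_mul_mul_of_logDeriv_neg {D : Set ℝ} (hD : Convex ℝ D)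
    (hf : ∀ x ∈ D, DifferentiableAt ℝ f x) (hg : ∀ x ∈ D, DifferentiableAt ℝ g x)
    (hh : ∀ x ∈ D, DifferentiableAt ℝ h x)
    (hf0 : ∀ x ∈ D, 0 < f x) (hg0 : ∀ x ∈ D, 0 < g x) (hh0 : ∀ x ∈ D, 0 < h x)
    (hneg : ∀ x ∈ interior D, logDeriv f x + logDeriv g x + logDeriv h x < 0) :
    StrictAntiOn (fun x => f x * g x * h x) D := by
  refine strictAntiOn_of_deriv_neg hD (fun x hx => ?_) fun x hx => ?_
  · exact (((hf x hx).mul (hg x hx)).mul (hh x hx)).continuousAt.continuousWithinAt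
  · have hxD := interior_subset hx
    have hfg0 := mul_pos (hf0 x hxD) (hg0 x hxD)
    have hlog : logDeriv (fun x => f x * g x * h x) x < 0 := by
      rw [logDeriv_mul (f := fun x => f x * g x) x hfg0.ne' (hh0 x hxD).ne'
          ((hf x hxD).mul (hg x hxD)) (hh x hxD),
        logDeriv_mul x (hf0 x hxD).ne' (hg0 x hxD).ne' (hf x hxD) (hg x hxD)]
      exact hneg x hx
    rwa [logDeriv_apply, div_lt_iff₀ (mul_pos hfg0 (hh0 x hxD)), zero_mul] at hlog

end LogDeriv

section Exponential

lemma pow_mul_le_exp {b x : ℝ} (n : ℕ) (hb : 0 ≤ b) (hbe : b ≤ Real.exp 1) (hx : n - 1 ≤ x) :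
    b ^ n * (x - n + 1) ≤ Real.exp x := by
  calc b ^ n * (x - n + 1) ≤ Real.exp 1 ^ n * Real.exp (x - n) :=
        mul_le_mul (pow_le_pow_left₀ hb hbe n) (Real.add_one_le_exp _) (by linarith) (by positivity)
    _ = Real.exp x := by rw [← Real.exp_nat_mul, ← Real.exp_add]; ring_nf

lemma exp_mul_sub_one_le {c : ℝ} (hc0 : 0 ≤ c) (hc1 : c ≤ 1) (x : ℝ) :
    Real.exp (c * x) - 1 ≤ c * (Real.exp x - 1) := by
  have hconv := convexOn_exp.2 (Set.mem_univ 0) (Set.mem_univ x) (sub_nonneg.2 hc1) hc0 (by ring)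
  simp only [smul_eq_mul, mul_zero, zero_add, Real.exp_zero, mul_one] at hconv
  linarith

lemma convexOn_sinh : ConvexOn ℝ (Set.Ici 0) Real.sinh := by
  refine MonotoneOn.convexOn_of_deriv (convex_Ici 0) Real.continuous_sinh.continuousOn
    Real.differentiable_sinh.differentiableOn ?_
  rw [interior_Ici, Real.deriv_sinh]
  exact Real.cosh_strictMonoOn.monotoneOn.mono Set.Ioi_subset_Ici_self

lemma sinh_mul_le {c x : ℝ} (hc0 : 0 ≤ c) (hc1 : c ≤ 1) (hx : 0 ≤ x) :
    Real.sinh (c * x) ≤ c * Real.sinh x := by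
  simpa using convexOn_sinh.2 Set.self_mem_Ici (Set.mem_Ici.2 hx) (sub_nonneg.2 hc1) hc0 (by ring)

lemma exp_add_sub_exp_sub (a b : ℝ) :
    Real.exp (a + b) - Real.exp (a - b) = 2 * Real.exp a * Real.sinh b := by
  rw [Real.sinh_eq, sub_eq_add_neg a b, Real.exp_add, Real.exp_add]
  ring

lemma exp_add_mul_sub_exp_sub_mul_le {a c x : ℝ} (hc0 : 0 ≤ c) (hc1 : c ≤ 1) (hx : 0 ≤ x)
    (hax : a ≤ x) : Real.exp (a + c * x) - Real.exp (a - c * x) ≤ c * Real.exp (2 * x) := by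
  have hsinh : 2 * Real.sinh x ≤ Real.exp x := by
    rw [Real.sinh_eq]
    linarith [Real.exp_pos (-x)]
  calc Real.exp (a + c * x) - Real.exp (a - c * x)
      = 2 * Real.exp a * Real.sinh (c * x) := exp_add_sub_exp_sub _ _
    _ ≤ 2 * Real.exp a * (c * Real.sinh x) := by gcongr; exact sinh_mul_le hc0 hc1 hx
    _ = c * (Real.exp a * (2 * Real.sinh x)) := by ring
    _ ≤ c * (Real.exp x * Real.exp x) := by gcongr
    _ = c * Real.exp (2 * x) := by rw [← Real.exp_add]; ring_nf

lemma exp_sub_one_div_exp_add_le {c u : ℝ} (hc : 0 < c) (hu : 0 ≤ u) :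
    (Real.exp u - 1) / (Real.exp u + c) ≤ (1 + c) / (4 * c) * u := by
  have hderiv (t : ℝ) : HasDerivAt (fun t => (Real.exp t - 1) / (Real.exp t + c))
      ((Real.exp t * (Real.exp t + c) - (Real.exp t - 1) * Real.exp t) / (Real.exp t + c) ^ 2) t :=
    ((Real.hasDerivAt_exp t).sub_const 1).fun_div ((Real.hasDerivAt_exp t).add_const c)
      (by positivity)
  have hslope (t : ℝ) :
      deriv (fun t => (Real.exp t - 1) / (Real.exp t + c)) t ≤ (1 + c) / (4 * c) := by
    rw [(hderiv t).deriv, div_le_div_iff₀ (by positivity) (by positivity)]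
    have amgm := mul_nonneg (by positivity : 0 ≤ 1 + c) (sq_nonneg (Real.exp t - c))
    linarith
  simpa using image_sub_le_mul_sub_of_deriv_le (fun t => (hderiv t).differentiableAt) hslope hu

lemma sub_le_mul_add_of_le_exp_mul {a b c u : ℝ} (hc : 0 < c) (hu : 0 ≤ u) (ha : 0 ≤ a)
    (hb : 0 ≤ b) (hab : a ≤ Real.exp u * b) :
    a - b ≤ (1 + c) / (4 * c) * u * (a + c * b) := by
  set k := (1 + c) / (4 * c) * u
  have hexp : Real.exp u - 1 ≤ k * (Real.exp u + c) :=
    (div_le_iff₀ (by positivity)).1 (exp_sub_one_div_exp_add_le hc hu)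
  rcases le_total k 1 with hk | hk
  · have hscaled := mul_le_mul_of_nonneg_right hab (sub_nonneg.2 hk)
    have hexp_b := mul_le_mul_of_nonneg_right hexp hb
    linarith
  · have hka := mul_le_mul_of_nonneg_right hk ha
    have hkcb : 0 ≤ k * (c * b) := mul_nonneg (zero_le_one.trans hk) (by positivity)
    linarith

lemma one_add_two_mul_le_exp_mul_one_sub {y : ℝ} (hy0 : 0 ≤ y) (hy : y ≤ 1 / 3) :
    1 + 2 * y ≤ Real.exp (3 * y) * (1 - y) := by
  have hquad := mul_le_mul_of_nonneg_right
    (Real.quadratic_le_exp_of_nonneg (by positivity : 0 ≤ 3 * y)) (by linarith : 0 ≤ 1 - y)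
  nlinarith [mul_nonneg (sq_nonneg y) (by linarith : 0 ≤ 1 - 3 * y)]

lemma rpow_one_add_two_mul_le {p y : ℝ} (hp : 0 ≤ p) (hy0 : 0 ≤ y) (hy : y ≤ 1 / 3) :
    (1 + 2 * y) ^ p ≤ Real.exp (3 * y * p) * (1 - y) ^ p := by
  rw [Real.exp_mul, ← Real.mul_rpow (Real.exp_pos _).le (by linarith)]
  exact Real.rpow_le_rpow (by positivity) (one_add_two_mul_le_exp_mul_one_sub hy0 hy) hp

lemma rpow_one_add_two_mul_sub_rpow_one_sub_le {p y : ℝ} (hp : 0 ≤ p) (hy0 : 0 ≤ y)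
    (hy : y ≤ 1 / 3) :
    (1 + 2 * y) ^ p - (1 - y) ^ p ≤ 9 / 8 * p * y * ((1 + 2 * y) ^ p + 2 * (1 - y) ^ p) := by
  have hminus : 0 ≤ 1 - y := by linarith
  have hdiff := sub_le_mul_add_of_le_exp_mul two_pos (by positivity) (by positivity)
    (Real.rpow_nonneg hminus p) (rpow_one_add_two_mul_le hp hy0 hy)
  linarith

end Exponential

section QFunctions

lemma hasDerivAt_q (x : ℝ) : HasDerivAt q (Real.exp x - 1) x :=
  ((Real.hasDerivAt_exp x).sub (hasDerivAt_id x)).sub_const 1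

lemma q_nonneg (x : ℝ) : 0 ≤ q x := by
  unfold q
  linarith [Real.add_one_le_exp x]

lemma q_pos {x : ℝ} (hx : x ≠ 0) : 0 < q x := by
  unfold q
  linarith [Real.add_one_lt_exp hx]

lemma le_Qf {s : ℝ} (hs : 0 < s) : s ≤ Qf s := by
  have hq : 0 < Real.exp s - s - 1 := q_pos hs.ne'
  rw [Qf, le_div_iff₀ hq]
  exact mul_le_mul_of_nonneg_left (by linarith) hs.le

lemma mul_exp_le_q {s : ℝ} (hs : 8 ≤ s) : 99 / 100 * Real.exp s ≤ q s := by
  have hexp := pow_mul_le_exp (b := 2.7) (x := s) 6 (by norm_num)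
    (by linarith [Real.exp_one_gt_d9]) (by norm_num; linarith)
  norm_num at hexp
  unfold q
  linarith

lemma mul_exp_seven_div_twenty_le_q {s : ℝ} (hs : 8 ≤ s) :
    14 * (s * Real.exp (7 / 20 * s)) ≤ q s := by
  have hexp := pow_mul_le_exp (b := 2.7) (x := 13 / 20 * s) 5 (by norm_num)
    (by linarith [Real.exp_one_gt_d9]) (by norm_num; linarith)
  norm_num at hexp
  have hlin : 14 * s ≤ 99 / 100 * Real.exp (13 / 20 * s) := by linarith
  calc 14 * (s * Real.exp (7 / 20 * s)) = 14 * s * Real.exp (7 / 20 * s) := by ring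
    _ ≤ 99 / 100 * Real.exp (13 / 20 * s) * Real.exp (7 / 20 * s) := by gcongr
    _ = 99 / 100 * Real.exp s := by rw [mul_assoc, ← Real.exp_add]; ring_nf
    _ ≤ q s := mul_exp_le_q hs

lemma mul_exp_seven_div_ten_le_q {s : ℝ} (hs : 8 ≤ s) :
    14 * (s * Real.exp (7 / 10 * s)) ≤ 15 * q s := by
  have hexp := pow_mul_le_exp (b := 2.7) (x := 3 / 10 * s) 2 (by norm_num)
    (by linarith [Real.exp_one_gt_d9]) (by norm_num; linarith)
  norm_num at hexp
  have hlin : 14 * s ≤ 15 * (99 / 100) * Real.exp (3 / 10 * s) := by linarith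
  calc 14 * (s * Real.exp (7 / 10 * s)) = 14 * s * Real.exp (7 / 10 * s) := by ring
    _ ≤ 15 * (99 / 100) * Real.exp (3 / 10 * s) * Real.exp (7 / 10 * s) := by gcongr
    _ = 15 * (99 / 100 * Real.exp s) := by rw [mul_assoc, ← Real.exp_add]; ring_nf
    _ ≤ 15 * q s := by gcongr; exact mul_exp_le_q hs

end QFunctions

section Slice

/-- The factor `OPT1` at `(x₀, x₁, x₂) = (1, 7/10 * Q * (y + z), 7/10 * Q * (y - z))`, with the term
`q s / q s` replaced by `1`. Here and below `Q` is a parameter, not necessarily `Qf s`. -/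
noncomputable def opt1Slice (s Q y z : ℝ) : ℝ :=
  1 + (q (s * (7 / 10 * Q * (y + z))) + q (s * (7 / 10 * Q * (y - z)))) / q s

/-- The factor `OPT2` at the same `(x₀, x₁, x₂)` and at `(y₀, y₁, y₂) = (1, y + z, y - z)`, written
with a negative exponent. -/
noncomputable def opt2Slice (Q y z : ℝ) : ℝ := (1 + 7 / 5 * Q * (y ^ 2 + z ^ 2)) ^ (-Q)

/-- The factor `OPT3` at `(y₀, y₁, y₂) = (1, y + z, y - z)`. -/
noncomputable def opt3Slice (Q y z : ℝ) : ℝ :=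
  (1 + 2 * y) ^ Q + 2 * ((1 - y) ^ 2 + 3 * z ^ 2) ^ (Q / 2)

lemma OPT_eq_slice {s : ℝ} (hs : 0 < s) (y z : ℝ) :
    OPT 1 (7 / 10 * Qf s * (y + z)) (7 / 10 * Qf s * (y - z)) 1 (y + z) (y - z) s =
      opt1Slice s (Qf s) y z * opt2Slice (Qf s) y z * opt3Slice (Qf s) y z := by
  have hQ : 0 < Qf s := hs.trans_le (le_Qf hs)
  have hq : q s ≠ 0 := (q_pos hs.ne').ne'
  have hbase : (1 : ℝ) * 1 + 7 / 10 * Qf s * (y + z) * (y + z) + 7 / 10 * Qf s * (y - z) * (y - z) =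
      1 + 7 / 5 * Qf s * (y ^ 2 + z ^ 2) := by ring
  have hsum : 1 + (y + z) + (y - z) = 1 + 2 * y := by ring
  have hnorm : 1 ^ 2 + (y + z) ^ 2 + (y - z) ^ 2 - 1 * (y + z) - 1 * (y - z) - (y + z) * (y - z) =
      (1 - y) ^ 2 + 3 * z ^ 2 := by ring
  rw [OPT, opt1Slice, opt2Slice, opt3Slice, hbase, hsum, hnorm, mul_one, add_assoc, add_div,
    div_self hq, one_div, Real.inv_rpow (by positivity), ← Real.rpow_neg (by positivity)]

lemma OPT_eq_slice_zero {s : ℝ} (hs : 0 < s) (y : ℝ) :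
    OPT 1 (7 / 10 * Qf s * y) (7 / 10 * Qf s * y) 1 y y s =
      opt1Slice s (Qf s) y 0 * opt2Slice (Qf s) y 0 * opt3Slice (Qf s) y 0 := by
  simpa only [add_zero, sub_zero] using OPT_eq_slice hs y 0

lemma one_le_opt1Slice (s Q y z : ℝ) : 1 ≤ opt1Slice s Q y z :=
  le_add_of_nonneg_right (div_nonneg (add_nonneg (q_nonneg _) (q_nonneg _)) (q_nonneg s))

lemma opt1Slice_pos (s Q y z : ℝ) : 0 < opt1Slice s Q y z :=
  one_pos.trans_le (one_le_opt1Slice s Q y z)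

lemma opt2Slice_pos {Q : ℝ} (hQ : 0 ≤ Q) (y z : ℝ) : 0 < opt2Slice Q y z := by
  unfold opt2Slice
  positivity

lemma opt2Slice_comm (Q y z : ℝ) : opt2Slice Q y z = opt2Slice Q z y := by
  rw [opt2Slice, opt2Slice, add_comm (y ^ 2)]

lemma opt3Slice_pos {y : ℝ} (hy : -1 / 2 < y) (Q z : ℝ) : 0 < opt3Slice Q y z := by
  have hbase : 0 < 1 + 2 * y := by linarith
  unfold opt3Slice
  positivity

lemma hasDerivAt_opt1Slice {Y Z : ℝ → ℝ} {Y' Z' x : ℝ} (hY : HasDerivAt Y Y' x)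
    (hZ : HasDerivAt Z Z' x) (s Q : ℝ) :
    HasDerivAt (fun t => opt1Slice s Q (Y t) (Z t))
      (((Real.exp (s * (7 / 10 * Q * (Y x + Z x))) - 1) * (s * (7 / 10 * Q * (Y' + Z'))) +
        (Real.exp (s * (7 / 10 * Q * (Y x - Z x))) - 1) * (s * (7 / 10 * Q * (Y' - Z')))) / q s)
      x :=
  (((hasDerivAt_q _).comp x (((hY.add hZ).const_mul _).const_mul s)).add
    ((hasDerivAt_q _).comp x (((hY.sub hZ).const_mul _).const_mul s))).div_const (q s)
    |>.const_add 1

variable {Y Z : ℝ → ℝ} {x : ℝ}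

lemma differentiableAt_opt1Slice (hY : DifferentiableAt ℝ Y x)
    (hZ : DifferentiableAt ℝ Z x) (s Q : ℝ) :
    DifferentiableAt ℝ (fun t => opt1Slice s Q (Y t) (Z t)) x :=
  (hasDerivAt_opt1Slice hY.hasDerivAt hZ.hasDerivAt s Q).differentiableAt

lemma differentiableAt_opt2Slice {Q : ℝ} (hY : DifferentiableAt ℝ Y x)
    (hZ : DifferentiableAt ℝ Z x) (hQ : 0 ≤ Q) :
    DifferentiableAt ℝ (fun t => opt2Slice Q (Y t) (Z t)) x := by
  refine DifferentiableAt.rpow_const (by fun_prop) (.inl ?_)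
  positivity

lemma differentiableAt_opt3Slice {Q : ℝ} (hY : DifferentiableAt ℝ Y x)
    (hZ : DifferentiableAt ℝ Z x) (hQ : 2 ≤ Q) :
    DifferentiableAt ℝ (fun t => opt3Slice Q (Y t) (Z t)) x :=
  (DifferentiableAt.rpow_const (by fun_prop) (.inr (by linarith))).add
    ((DifferentiableAt.rpow_const (by fun_prop) (.inr (by linarith))).const_mul 2)

end Slice

section LogDerivBounds

variable {s Q y z : ℝ}

lemma logDeriv_opt1Slice_diagonal_le (hs : 8 ≤ s) (hQ : 0 ≤ Q) (hy : 0 ≤ y)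
    (hQy : Q * y ≤ 1 / 2) : logDeriv (fun t => opt1Slice s Q t 0) y ≤ 1 / 5 * Q ^ 2 * y := by
  have hq : 0 < q s := q_pos (by linarith)
  have hexp : Real.exp (s * (7 / 10 * Q * y)) - 1 ≤ 2 * (Q * y) * Real.exp (7 / 20 * s) :=
    calc Real.exp (s * (7 / 10 * Q * y)) - 1 = Real.exp (2 * (Q * y) * (7 / 20 * s)) - 1 := by
          ring_nf
      _ ≤ 2 * (Q * y) * (Real.exp (7 / 20 * s) - 1) :=
          exp_mul_sub_one_le (by positivity) (by linarith) _
      _ ≤ 2 * (Q * y) * Real.exp (7 / 20 * s) := by gcongr; linarith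
  refine logDeriv_le_of_hasDerivAt
    (hasDerivAt_opt1Slice (hasDerivAt_id y) (hasDerivAt_const y 0) s Q) (opt1Slice_pos s Q y 0) ?_
  simp only [id, add_zero, sub_zero, mul_one]
  refine le_trans ?_ (le_mul_of_one_le_right (by positivity) (one_le_opt1Slice s Q y 0))
  rw [div_le_iff₀ hq]
  calc (Real.exp (s * (7 / 10 * Q * y)) - 1) * (s * (7 / 10 * Q)) +
        (Real.exp (s * (7 / 10 * Q * y)) - 1) * (s * (7 / 10 * Q))
      = (Real.exp (s * (7 / 10 * Q * y)) - 1) * (s * (7 / 5 * Q)) := by ring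
    _ ≤ 2 * (Q * y) * Real.exp (7 / 20 * s) * (s * (7 / 5 * Q)) := by gcongr
    _ = 1 / 5 * Q ^ 2 * y * (14 * (s * Real.exp (7 / 20 * s))) := by ring
    _ ≤ 1 / 5 * Q ^ 2 * y * q s := by gcongr; exact mul_exp_seven_div_twenty_le_q hs

lemma logDeriv_opt1Slice_split_le (hs : 8 ≤ s) (hQ : 0 ≤ Q) (hz : 0 ≤ z)
    (hQy : Q * y ≤ 1 / 2) (hQz : Q * z ≤ 1 / 2) :
    logDeriv (fun t => opt1Slice s Q y t) z ≤ 3 / 2 * Q ^ 2 * z := by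
  have hq : 0 < q s := q_pos (by linarith)
  have hexp : Real.exp (s * (7 / 10 * Q * (y + z))) - Real.exp (s * (7 / 10 * Q * (y - z))) ≤
      2 * (Q * z) * Real.exp (7 / 10 * s) := by
    have hsQy : s * (7 / 10) * (Q * y) ≤ s * (7 / 10) * (1 / 2) := by gcongr
    convert exp_add_mul_sub_exp_sub_mul_le (a := s * (7 / 10) * (Q * y)) (c := 2 * (Q * z))
      (x := 7 / 20 * s) (by positivity) (by linarith) (by positivity) (by linarith) using 3 <;> ring
  refine logDeriv_le_of_hasDerivAt
    (hasDerivAt_opt1Slice (hasDerivAt_const z y) (hasDerivAt_id z) s Q) (opt1Slice_pos s Q y z) ?_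
  simp only [id, zero_add, zero_sub, mul_one, mul_neg]
  refine le_trans ?_ (le_mul_of_one_le_right (by positivity) (one_le_opt1Slice s Q y z))
  rw [div_le_iff₀ hq]
  calc (Real.exp (s * (7 / 10 * Q * (y + z))) - 1) * (s * (7 / 10 * Q)) +
        -((Real.exp (s * (7 / 10 * Q * (y - z))) - 1) * (s * (7 / 10 * Q)))
      = (Real.exp (s * (7 / 10 * Q * (y + z))) - Real.exp (s * (7 / 10 * Q * (y - z)))) *
          (s * (7 / 10 * Q)) := by ring
    _ ≤ 2 * (Q * z) * Real.exp (7 / 10 * s) * (s * (7 / 10 * Q)) := by gcongr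
    _ = 1 / 10 * Q ^ 2 * z * (14 * (s * Real.exp (7 / 10 * s))) := by ring
    _ ≤ 1 / 10 * Q ^ 2 * z * (15 * q s) :=
        mul_le_mul_of_nonneg_left (mul_exp_seven_div_ten_le_q hs) (by positivity)
    _ = 3 / 2 * Q ^ 2 * z * q s := by ring

lemma le_one_div_sixteen (hQ : 8 ≤ Q) (hy : 0 ≤ y) (hQy : Q * y ≤ 1 / 2) : y ≤ 1 / 16 := by
  linarith [mul_le_mul_of_nonneg_right hQ hy]

lemma mul_sq_le_one_div_thirty_two (hQ : 8 ≤ Q) (hy : 0 ≤ y) (hQy : Q * y ≤ 1 / 2) :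
    Q * y ^ 2 ≤ 1 / 32 :=
  calc Q * y ^ 2 = Q * y * y := by ring
    _ ≤ 1 / 2 * (1 / 16) := mul_le_mul hQy (le_one_div_sixteen hQ hy hQy) hy (by norm_num)
    _ = 1 / 32 := by norm_num

lemma logDeriv_opt2Slice_split_le (hQ : 8 ≤ Q) (hy : 0 ≤ y) (hz : 0 ≤ z)
    (hQy : Q * y ≤ 1 / 2) (hQz : Q * z ≤ 1 / 2) :
    logDeriv (fun t => opt2Slice Q y t) z ≤ -(5 / 2) * Q ^ 2 * z := by
  have hbase : 0 < 1 + 7 / 5 * Q * (y ^ 2 + z ^ 2) := by positivity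
  have hderiv : HasDerivAt (fun t => 1 + 7 / 5 * Q * (y ^ 2 + t ^ 2)) (14 / 5 * Q * z) z :=
    (((hasDerivAt_pow 2 z).const_add (y ^ 2)).const_mul (7 / 5 * Q)).const_add 1
      |>.congr_deriv (by norm_num; ring)
  have hbase_le : 1 + 7 / 5 * Q * (y ^ 2 + z ^ 2) ≤ 87 / 80 := by
    linarith [mul_sq_le_one_div_thirty_two hQ hy hQy, mul_sq_le_one_div_thirty_two hQ hz hQz]
  unfold opt2Slice
  rw [logDeriv_rpow_const (-Q) hderiv.differentiableAt hbase, logDeriv_apply, hderiv.deriv]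
  suffices 5 / 2 * Q * z ≤ 14 / 5 * Q * z / (1 + 7 / 5 * Q * (y ^ 2 + z ^ 2)) by
    linarith [mul_le_mul_of_nonneg_left this (by positivity : 0 ≤ Q)]
  rw [le_div_iff₀ hbase]
  calc 5 / 2 * Q * z * (1 + 7 / 5 * Q * (y ^ 2 + z ^ 2)) ≤ 5 / 2 * Q * z * (87 / 80) := by gcongr
    _ ≤ 14 / 5 * Q * z := by linarith [(by positivity : 0 ≤ Q * z)]

lemma logDeriv_opt2Slice_diagonal_le (hQ : 8 ≤ Q) (hy : 0 ≤ y) (hQy : Q * y ≤ 1 / 2) :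
    logDeriv (fun t => opt2Slice Q t 0) y ≤ -(5 / 2) * Q ^ 2 * y := by
  simpa only [opt2Slice_comm Q _ 0] using
    logDeriv_opt2Slice_split_le hQ le_rfl hy (by norm_num) hQy

lemma logDeriv_rpow_add_two_mul_rpow_le (hQ : 1 ≤ Q) (hy0 : 0 ≤ y) (hy : y ≤ 1 / 3) :
    logDeriv (fun t => (1 + 2 * t) ^ Q + 2 * (1 - t) ^ Q) y ≤ 9 / 4 * Q ^ 2 * y := by
  have hplus : 0 < 1 + 2 * y := by linarith
  have hminus : 0 < 1 - y := by linarith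
  have hderiv_plus : HasDerivAt (fun t : ℝ => 1 + 2 * t) 2 y := by
    simpa using ((hasDerivAt_id y).const_mul (2 : ℝ)).const_add 1
  have hderiv := (hderiv_plus.rpow_const (p := Q) (.inl hplus.ne')).fun_add
    ((((hasDerivAt_id' y).const_sub 1).rpow_const (p := Q) (.inl hminus.ne')).const_mul 2)
  refine logDeriv_le_of_hasDerivAt hderiv (by positivity) ?_
  have hsplit {b : ℝ} (hb : 0 < b) : b ^ Q = b ^ (Q - 1) * b := by
    rw [Real.rpow_sub_one hb.ne', div_mul_cancel₀ _ hb.ne']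
  have hdiff := rpow_one_add_two_mul_sub_rpow_one_sub_le (sub_nonneg.2 hQ) hy0 hy
  have hmono : (1 - y) ^ (Q - 1) ≤ (1 + 2 * y) ^ (Q - 1) :=
    Real.rpow_le_rpow hminus.le (by linarith) (by linarith)
  rw [hsplit hplus, hsplit hminus]
  set P := (1 + 2 * y) ^ (Q - 1)
  set S := (1 - y) ^ (Q - 1)
  have hweights : P + 2 * S ≤ P * (1 + 2 * y) + 2 * (S * (1 - y)) := by
    linarith [mul_le_mul_of_nonneg_left hmono hy0]
  calc 2 * Q * P + 2 * (-1 * Q * S) = 2 * Q * (P - S) := by ring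
    _ ≤ 2 * Q * (9 / 8 * (Q - 1) * y * (P + 2 * S)) := by gcongr
    _ ≤ 2 * Q * (9 / 8 * Q * y * (P * (1 + 2 * y) + 2 * (S * (1 - y)))) := by gcongr; linarith
    _ = 9 / 4 * Q ^ 2 * y * (P * (1 + 2 * y) + 2 * (S * (1 - y))) := by ring

lemma opt3Slice_zero (Q : ℝ) (hy : y ≤ 1) :
    opt3Slice Q y 0 = (1 + 2 * y) ^ Q + 2 * (1 - y) ^ Q := by
  have hpow : ((1 - y) ^ 2) ^ (Q / 2) = (1 - y) ^ Q := by
    rw [← Real.rpow_natCast_mul (by linarith), Nat.cast_ofNat, mul_div_cancel₀ Q two_ne_zero]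
  rw [opt3Slice, ← hpow]
  norm_num

lemma logDeriv_opt3Slice_diagonal_le (hQ : 1 ≤ Q) (hy0 : 0 ≤ y) (hy : y ≤ 1 / 3) :
    logDeriv (fun t => opt3Slice Q t 0) y ≤ 9 / 4 * Q ^ 2 * y := by
  have hloc : (fun t => opt3Slice Q t 0) =ᶠ[nhds y] fun t => (1 + 2 * t) ^ Q + 2 * (1 - t) ^ Q := by
    filter_upwards [Iio_mem_nhds (by linarith : y < 1)] with t ht using opt3Slice_zero Q ht.le
  rw [(logDeriv_congr_nhds hloc).self_of_nhds]
  exact logDeriv_rpow_add_two_mul_rpow_le hQ hy0 hy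

lemma logDeriv_opt3Slice_split_le (hQ : 8 ≤ Q) (hy0 : 0 ≤ y) (hy : y ≤ 1 / 16) (hz : 0 ≤ z) :
    logDeriv (fun t => opt3Slice Q y t) z ≤ 1 / 2 * Q ^ 2 * z := by
  have hbase : 4 / 5 ≤ (1 - y) ^ 2 + 3 * z ^ 2 := by
    nlinarith
  have hpos : 0 < (1 - y) ^ 2 + 3 * z ^ 2 := by linarith
  have hderiv : HasDerivAt (fun t => (1 - y) ^ 2 + 3 * t ^ 2) (6 * z) z :=
    ((hasDerivAt_pow 2 z).const_mul 3).const_add ((1 - y) ^ 2) |>.congr_deriv (by norm_num; ring)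
  have hlog : logDeriv (fun t => 2 * ((1 - y) ^ 2 + 3 * t ^ 2) ^ (Q / 2)) z =
      Q / 2 * (6 * z / ((1 - y) ^ 2 + 3 * z ^ 2)) := by
    rw [logDeriv_const_mul z 2 two_ne_zero,
      logDeriv_rpow_const (Q / 2) hderiv.differentiableAt hpos, logDeriv_apply, hderiv.deriv]
  calc logDeriv (fun t => opt3Slice Q y t) z
      ≤ logDeriv (fun t => 2 * ((1 - y) ^ 2 + 3 * t ^ 2) ^ (Q / 2)) z :=
        logDeriv_const_add_le (by positivity) (by positivity) (by rw [hlog]; positivity)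
    _ = Q / 2 * (6 * z / ((1 - y) ^ 2 + 3 * z ^ 2)) := hlog
    _ ≤ Q / 2 * (6 * z / (4 / 5)) := by gcongr
    _ = 15 / 32 * (8 * Q) * z := by ring
    _ ≤ 15 / 32 * (Q * Q) * z := by gcongr
    _ ≤ 1 / 2 * Q ^ 2 * z := by linarith [(by positivity : 0 ≤ Q ^ 2 * z)]

end LogDerivBounds

section Monotonicity

variable {s : ℝ}

lemma strictAntiOn_OPT_diagonal (hs : 8 ≤ s) :
    StrictAntiOn (fun y => OPT 1 (7 / 10 * Qf s * y) (7 / 10 * Qf s * y) 1 y y s)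
      (Set.Icc 0 (1 / (2 * Qf s))) := by
  have hQ : 8 ≤ Qf s := hs.trans (le_Qf (by linarith))
  simp only [OPT_eq_slice_zero (by linarith : 0 < s)]
  refine strictAntiOn_mul_mul_of_logDeriv_neg (convex_Icc _ _)
    (fun y _ => differentiableAt_opt1Slice (by fun_prop) (by fun_prop) s _)
    (fun y _ => differentiableAt_opt2Slice (by fun_prop) (by fun_prop) (by linarith))
    (fun y _ => differentiableAt_opt3Slice (by fun_prop) (by fun_prop) (by linarith))
    (fun y _ => opt1Slice_pos s _ y 0) (fun y _ => opt2Slice_pos (by linarith) y 0)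
    (fun y hy => opt3Slice_pos (by linarith [hy.1]) _ 0) fun y hy => ?_
  obtain ⟨hy0, hy⟩ : 0 < y ∧ y < 1 / (2 * Qf s) := by rwa [interior_Icc] at hy
  have hQy : Qf s * y ≤ 1 / 2 := by
    rw [lt_div_iff₀ (by positivity)] at hy
    linarith
  have hy16 := le_one_div_sixteen hQ hy0.le hQy
  have h1 := logDeriv_opt1Slice_diagonal_le hs (by linarith) hy0.le hQy
  have h2 := logDeriv_opt2Slice_diagonal_le hQ hy0.le hQy
  have h3 := logDeriv_opt3Slice_diagonal_le (Q := Qf s) (by linarith) hy0.le (by linarith)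
  linarith [(by positivity : 0 < Qf s ^ 2 * y)]

lemma strictAntiOn_OPT_split (hs : 8 ≤ s) {y : ℝ} (hy : y ∈ Set.Icc 0 (1 / (2 * Qf s))) :
    StrictAntiOn
      (fun z => OPT 1 (7 / 10 * Qf s * (y + z)) (7 / 10 * Qf s * (y - z)) 1 (y + z) (y - z) s)
      (Set.Icc 0 y) := by
  have hQ : 8 ≤ Qf s := hs.trans (le_Qf (by linarith))
  obtain ⟨hy0, hyQ⟩ := hy
  have hQy : Qf s * y ≤ 1 / 2 := by
    rw [le_div_iff₀ (by positivity)] at hyQ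
    linarith
  simp only [OPT_eq_slice (by linarith : 0 < s)]
  refine strictAntiOn_mul_mul_of_logDeriv_neg (convex_Icc _ _)
    (fun z _ => differentiableAt_opt1Slice (by fun_prop) (by fun_prop) s _)
    (fun z _ => differentiableAt_opt2Slice (by fun_prop) (by fun_prop) (by linarith))
    (fun z _ => differentiableAt_opt3Slice (by fun_prop) (by fun_prop) (by linarith))
    (fun z _ => opt1Slice_pos s _ y z) (fun z _ => opt2Slice_pos (by linarith) y z)
    (fun z _ => opt3Slice_pos (by linarith) _ z) fun z hz => ?_
  obtain ⟨hz0, hzy⟩ : 0 < z ∧ z < y := by rwa [interior_Icc] at hz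
  have hQz : Qf s * z ≤ 1 / 2 := le_trans (by gcongr) hQy
  have h1 := logDeriv_opt1Slice_split_le hs (by linarith) hz0.le hQy hQz
  have h2 := logDeriv_opt2Slice_split_le hQ hy0 hz0.le hQy hQz
  have h3 := logDeriv_opt3Slice_split_le hQ hy0 (le_one_div_sixteen hQ hy0 hQy) hz0.le
  linarith [(by positivity : 0 < Qf s ^ 2 * z)]

lemma OPT_diagonal_zero (hs : 0 < s) :
    OPT 1 (7 / 10 * Qf s * 0) (7 / 10 * Qf s * 0) 1 0 0 s = 3 := by
  rw [OPT_eq_slice_zero hs]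
  norm_num [opt1Slice, opt2Slice, opt3Slice, q]

end Monotonicity

theorem stmt6 (s : ℝ) (hs : 8 ≤ s) :
    (StrictAntiOn
        (fun y => OPT 1 (7/10 * Qf s * y) (7/10 * Qf s * y) 1 y y s)
        (Set.Icc 0 (1/(2 * Qf s))) ∧
      OPT 1 (7/10 * Qf s * 0) (7/10 * Qf s * 0) 1 0 0 s = 3) ∧
    ∀ y ∈ Set.Icc (0:ℝ) (1/(2 * Qf s)),
      AntitoneOn
        (fun z => OPT 1 (7/10 * Qf s * (y+z)) (7/10 * Qf s * (y-z)) 1 (y+z) (y-z) s)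
        (Set.Icc 0 y) := by
  exact ⟨⟨strictAntiOn_OPT_diagonal hs, OPT_diagonal_zero (by linarith)⟩,
    fun _ hy => (strictAntiOn_OPT_split hs hy).antitoneOn⟩
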